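/- arXiv:1712.00589 — 6 statements merged into one kernel-verified Lean document; each statement's English description precedes it below -/
import Mathlib

section
/- Let d ≥ 1, let ρ > 0, and let X ⊆ ℝ^d be a finite set such that r_A ≠ ρ/2 for every nonempty A ⊆ X. Then there exists δ > 0 such that for every finite set Z ⊆ ℝ^d and every bijection f : X → Z with ‖f(x) − x‖ < δ for all x ∈ X, the Čech complexes Čech(X,ρ) and Čech(Z,ρ) are combinatorially equivalent via f: for every nonempty A ⊆ X, there exists y ∈ ℝ^d with ‖x − y‖ ≤ ρ/2 for all x ∈ A if and only if there exists y' ∈ ℝ^d with ‖f(x) − y'‖ ≤ ρ/2 for all x ∈ A. -/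
/-- The radius of the minimal bounding sphere of a finite nonempty set. -/
noncomputable def circumradius {d : ℕ} (A : Finset (EuclideanSpace ℝ (Fin d)))
    (hA : A.Nonempty) : ℝ :=
  ⨅ y : EuclideanSpace ℝ (Fin d), A.sup' hA fun x => ‖x - y‖

/-!
For a fixed index set `A`, the minimal bounding radius of a family of points is a `1`-Lipschitz
function of the family in the sup distance. Away from the critical value `r`, having a common
center at distance at most `r` is the same as having bounding radius `< r`, so no minimizing center
is ever needed. As there are finitely many `A`, the distance from their radii to `r` is bounded
below by some `δ > 0`, and a perturbation of size `δ` cannot carry any radius across `r`.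
-/

section BoundingRadius

variable {ι E : Type*} [PseudoMetricSpace E] {A : Finset ι} {x z : ι → E} {r δ : ℝ}

/-- The radius of the minimal bounding sphere of the points `x i`, `i ∈ A`. Points are indexed, so
that they can be perturbed, and possibly made to collide, without changing `A`. -/
noncomputable def boundingRadius (A : Finset ι) (hA : A.Nonempty) (x : ι → E) : ℝ :=
  ⨅ y : E, A.sup' hA fun i => dist (x i) y

/-- `A` is a simplex of the Čech complex of the family `x`: the closed balls of radius `r` around
the points `x i`, `i ∈ A`, have a common point. The scale of the complex is `ρ = 2 * r`. -/
def IsCechSimplex (x : ι → E) (r : ℝ) (A : Finset ι) : Prop :=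
  ∃ y : E, ∀ i ∈ A, dist (x i) y ≤ r

theorem boundingRadius_le (hA : A.Nonempty) {y : E} (hy : ∀ i ∈ A, dist (x i) y ≤ r) :
    boundingRadius A hA x ≤ r := by
  obtain ⟨i, hi⟩ := hA
  have bddBelow : BddBelow (Set.range fun y : E => A.sup' ⟨i, hi⟩ fun i => dist (x i) y) :=
    ⟨0, Set.forall_mem_range.2 fun y => Finset.le_sup'_of_le _ hi dist_nonneg⟩
  exact ciInf_le_of_le bddBelow y (Finset.sup'_le _ _ hy)

theorem exists_forall_dist_lt_of_boundingRadius_lt (hA : A.Nonempty)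
    (h : boundingRadius A hA x < r) : ∃ y : E, ∀ i ∈ A, dist (x i) y < r := by
  have : Nonempty E := hA.elim fun i _ => ⟨x i⟩
  obtain ⟨y, hy⟩ := exists_lt_of_ciInf_lt h
  exact ⟨y, (Finset.sup'_lt_iff hA).1 hy⟩

theorem isCechSimplex_iff_boundingRadius_lt (hA : A.Nonempty) (hr : boundingRadius A hA x ≠ r) :
    IsCechSimplex x r A ↔ boundingRadius A hA x < r := by
  constructor
  · rintro ⟨y, hy⟩
    exact (boundingRadius_le hA hy).lt_of_ne hr
  · intro h
    obtain ⟨y, hy⟩ := exists_forall_dist_lt_of_boundingRadius_lt hA h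
    exact ⟨y, fun i hi => (hy i hi).le⟩

theorem boundingRadius_le_add (hA : A.Nonempty) (hxz : ∀ i ∈ A, dist (x i) (z i) ≤ δ) :
    boundingRadius A hA x ≤ boundingRadius A hA z + δ := by
  refine le_of_forall_pos_le_add fun ε hε => ?_
  obtain ⟨y, hy⟩ := exists_forall_dist_lt_of_boundingRadius_lt hA
    (lt_add_of_pos_right (boundingRadius A hA z) hε)
  refine boundingRadius_le hA (y := y) fun i hi => ?_
  calc dist (x i) y ≤ dist (x i) (z i) + dist (z i) y := dist_triangle _ _ _
    _ ≤ δ + (boundingRadius A hA z + ε) := add_le_add (hxz i hi) (hy i hi).le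
    _ = boundingRadius A hA z + δ + ε := by ring

theorem abs_boundingRadius_sub_le (hA : A.Nonempty) (hxz : ∀ i ∈ A, dist (x i) (z i) ≤ δ) :
    |boundingRadius A hA x - boundingRadius A hA z| ≤ δ :=
  abs_sub_le_iff.2
    ⟨sub_le_iff_le_add'.2 (boundingRadius_le_add hA hxz),
      sub_le_iff_le_add'.2 (boundingRadius_le_add hA fun i hi => dist_comm (x i) (z i) ▸ hxz i hi)⟩

theorem isCechSimplex_congr_of_dist_le (hA : A.Nonempty) (hδ : δ < |boundingRadius A hA x - r|)
    (hzx : ∀ i ∈ A, dist (z i) (x i) ≤ δ) : IsCechSimplex x r A ↔ IsCechSimplex z r A := by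
  obtain ⟨hlower, hupper⟩ := abs_le.1 (abs_boundingRadius_sub_le hA hzx)
  rcases lt_abs.1 hδ with habove | hbelow
  · have hx : r < boundingRadius A hA x := by linarith
    have hz : r < boundingRadius A hA z := by linarith
    rw [isCechSimplex_iff_boundingRadius_lt hA hx.ne',
      isCechSimplex_iff_boundingRadius_lt hA hz.ne']
    exact iff_of_false hx.not_gt hz.not_gt
  · have hx : boundingRadius A hA x < r := by linarith
    have hz : boundingRadius A hA z < r := by linarith
    rw [isCechSimplex_iff_boundingRadius_lt hA hx.ne,
      isCechSimplex_iff_boundingRadius_lt hA hz.ne]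
    exact iff_of_true hx hz

theorem exists_pos_forall_lt_abs_boundingRadius_sub {X : Finset ι}
    (hcrit : ∀ A ⊆ X, ∀ hA : A.Nonempty, boundingRadius A hA x ≠ r) :
    ∃ δ > 0, ∀ A ⊆ X, ∀ hA : A.Nonempty, δ < |boundingRadius A hA x - r| := by
  let gap (A : {A : X.powerset // A.1.Nonempty}) : ℝ := |boundingRadius A.1.1 A.2 x - r|
  have gap_pos (A) : 0 < gap A :=
    abs_sub_pos.2 (hcrit A.1.1 (Finset.mem_powerset.1 A.1.2) A.2)
  obtain ⟨δ, hδ, hlt⟩ := Pi.exists_forall_pos_add_lt gap_pos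
  refine ⟨δ, hδ, fun A hAX hA => ?_⟩
  simpa only [zero_add] using hlt ⟨⟨A, Finset.mem_powerset.2 hAX⟩, hA⟩

theorem cech_generic_of_no_critical_circumradius_general {X : Finset ι}
    (hcrit : ∀ A ⊆ X, ∀ hA : A.Nonempty, boundingRadius A hA x ≠ r) :
    ∃ δ > 0, ∀ z : ι → E, (∀ i ∈ X, dist (z i) (x i) < δ) →
      ∀ A ⊆ X, A.Nonempty → (IsCechSimplex x r A ↔ IsCechSimplex z r A) := by
  obtain ⟨δ, hδ, hgap⟩ := exists_pos_forall_lt_abs_boundingRadius_sub hcrit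
  exact ⟨δ, hδ, fun z hzx A hAX hA =>
    isCechSimplex_congr_of_dist_le hA (hgap A hAX hA) fun i hi => (hzx i (hAX hi)).le⟩

end BoundingRadius

theorem circumradius_eq_boundingRadius_id {d : ℕ} (A : Finset (EuclideanSpace ℝ (Fin d)))
    (hA : A.Nonempty) : circumradius A hA = boundingRadius A hA id := by
  simp only [circumradius, boundingRadius, dist_eq_norm, id]

/-- If no nonempty subset of the finite set `X ⊆ ℝ^d` has minimal bounding radius
exactly `ρ/2`, then `X` is a generic Čech representation: there is `δ > 0` such that
moving each point by less than `δ` yields a combinatorially equivalent Čech complex. -/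
theorem cech_generic_of_no_critical_circumradius
    (d : ℕ) (hd : 1 ≤ d) (ρ : ℝ) (hρ : 0 < ρ) (X : Finset (EuclideanSpace ℝ (Fin d)))
    (hcrit : ∀ A : Finset (EuclideanSpace ℝ (Fin d)), A ⊆ X → ∀ hA : A.Nonempty,
      circumradius A hA ≠ ρ / 2) :
    ∃ δ > (0 : ℝ), ∀ Z : Finset (EuclideanSpace ℝ (Fin d)),
      ∀ f : EuclideanSpace ℝ (Fin d) → EuclideanSpace ℝ (Fin d),
        Set.BijOn f ↑X ↑Z → (∀ x ∈ X, ‖f x - x‖ < δ) →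
        ∀ A : Finset (EuclideanSpace ℝ (Fin d)), A ⊆ X → A.Nonempty →
          ((∃ y : EuclideanSpace ℝ (Fin d), ∀ x ∈ A, ‖x - y‖ ≤ ρ / 2) ↔
            (∃ y' : EuclideanSpace ℝ (Fin d), ∀ x ∈ A, ‖f x - y'‖ ≤ ρ / 2)) := by
  simp only [circumradius_eq_boundingRadius_id] at hcrit
  obtain ⟨δ, hδ, hstable⟩ := cech_generic_of_no_critical_circumradius_general hcrit
  simp only [IsCechSimplex, dist_eq_norm, id] at hstable
  exact ⟨δ, hδ, fun _ f _ => hstable f⟩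
end

section
/- Let d ≥ 1, let ρ > 0, and let X ⊆ ℝ^d be a finite set. Then there exist a finite set Y ⊆ ℝ^d, a bijection g : X → Y such that the Vietoris–Rips complexes VR(X,ρ) and VR(Y,ρ) are combinatorially equivalent via g, and a δ > 0 such that for every finite set Z ⊆ ℝ^d and every bijection f : Y → Z with ‖f(y) − y‖ < δ for all y ∈ Y, the complexes VR(Y,ρ) and VR(Z,ρ) are combinatorially equivalent via f. In other words, every finite simplicial complex admitting a d-dimensional Vietoris–Rips representation with respect to ρ admits a generic d-dimensional Vietoris–Rips representation with respect to ρ. -/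
open scoped Classical

/-- `A` is a simplex of the Vietoris–Rips complex with parameter `ρ` (of any point
set containing `A`): all pairwise distances are at most `ρ`. -/
def IsVRSimplex {d : ℕ} (ρ : ℝ) (A : Finset (EuclideanSpace ℝ (Fin d))) : Prop :=
  ∀ x ∈ A, ∀ x' ∈ A, ‖x - x'‖ ≤ ρ

/-!
Shrinking `X` by a factor `c < 1` makes every distance that is at most `ρ` strictly smaller than
`ρ`, and for `c` close to `1` the finitely many distances larger than `ρ` stay larger. The scaled
set therefore spans the same complex and has no distance equal to `ρ`; being finite, it has a
positive gap between its distances and `ρ`, which small perturbations cannot close.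
-/

open Filter Topology

section PseudoMetricSpace

variable {α β : Type*} [PseudoMetricSpace α] [PseudoMetricSpace β] {ρ : ℝ}

/-- `A` is a simplex of the Vietoris–Rips complex with parameter `ρ`, in an arbitrary pseudometric
space; on Euclidean space this is `IsVRSimplex`. -/
def IsRipsSimplex (ρ : ℝ) (A : Finset α) : Prop :=
  ∀ x ∈ A, ∀ y ∈ A, dist x y ≤ ρ

/-- `f` maps simplices of `VR(X, ρ)` to simplices of `VR(f(X), ρ)` and non-simplices to
non-simplices, so that an `f` injective on `X` is a combinatorial equivalence between the two
complexes. Injectivity is not part of the definition. -/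
def IsRipsEquivOn [DecidableEq β] (ρ : ℝ) (f : α → β) (X : Finset α) : Prop :=
  ∀ A ⊆ X, A.Nonempty → (IsRipsSimplex ρ A ↔ IsRipsSimplex ρ (A.image f))

/-- `Y` is a generic Vietoris–Rips representation with respect to `ρ`: moving each point by less
than some fixed `δ > 0` does not change the complex. The perturbation is an arbitrary map, so
moved points may coincide. -/
def IsGenericRips [DecidableEq α] (ρ : ℝ) (Y : Finset α) : Prop :=
  ∃ δ > 0, ∀ f : α → α, (∀ y ∈ Y, dist (f y) y < δ) → IsRipsEquivOn ρ f Y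

theorem isRipsEquivOn_of_dist_le_iff [DecidableEq β] {f : α → β} {X : Finset α}
    (hf : ∀ x ∈ X, ∀ y ∈ X, (dist (f x) (f y) ≤ ρ ↔ dist x y ≤ ρ)) :
    IsRipsEquivOn ρ f X := by
  intro A hA _
  simp only [IsRipsSimplex, Finset.forall_mem_image]
  exact forall₂_congr fun x hx ↦ forall₂_congr fun y hy ↦ (hf x (hA hx) y (hA hy)).symm

theorem dist_le_iff_of_dist_lt {x y x' y' : α} {δ : ℝ} (hδ : 2 * δ ≤ |dist x y - ρ|)
    (hx : dist x' x < δ) (hy : dist y' y < δ) : dist x' y' ≤ ρ ↔ dist x y ≤ ρ := by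
  have hclose : |dist x' y' - dist x y| < 2 * δ :=
    calc |dist x' y' - dist x y| ≤ dist x' x + dist y' y := dist_dist_dist_le x' y' x y
      _ < 2 * δ := by linarith
  obtain ⟨hlower, hupper⟩ := abs_lt.mp hclose
  rcases le_abs'.mp hδ with hbelow | habove <;> constructor <;> intro <;> linarith

theorem exists_pos_forall_two_mul_le_abs_dist_sub {Y : Finset α}
    (hY : ∀ x ∈ Y, ∀ y ∈ Y, dist x y ≠ ρ) :
    ∃ δ > 0, ∀ x ∈ Y, ∀ y ∈ Y, 2 * δ ≤ |dist x y - ρ| := by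
  have hsmall : ∀ᶠ δ in 𝓝[>] (0 : ℝ), ∀ x ∈ Y, ∀ y ∈ Y, δ < |dist x y - ρ| / 2 := by
    simp only [eventually_all_finset]
    intro x hx y hy
    have hgap : 0 < |dist x y - ρ| := abs_sub_pos.mpr (hY x hx y hy)
    exact eventually_nhdsWithin_of_eventually_nhds (eventually_lt_nhds (half_pos hgap))
  obtain ⟨δ, hδ, hδ_pos⟩ := (hsmall.and self_mem_nhdsWithin).exists
  exact ⟨δ, hδ_pos, fun x hx y hy ↦ by linarith [hδ x hx y hy]⟩

theorem isGenericRips_of_dist_ne [DecidableEq α] {Y : Finset α}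
    (hY : ∀ x ∈ Y, ∀ y ∈ Y, dist x y ≠ ρ) : IsGenericRips ρ Y := by
  obtain ⟨δ, hδ_pos, hδ⟩ := exists_pos_forall_two_mul_le_abs_dist_sub hY
  exact ⟨δ, hδ_pos, fun f hf ↦ isRipsEquivOn_of_dist_le_iff fun x hx y hy ↦
    dist_le_iff_of_dist_lt (hδ x hx y hy) (hf x hx) (hf y hy)⟩

end PseudoMetricSpace

theorem eventually_mul_ne_and_mul_le_iff {ρ : ℝ} (hρ : 0 < ρ) (r : ℝ) :
    ∀ᶠ c in 𝓝[<] (1 : ℝ), c * r ≠ ρ ∧ (c * r ≤ ρ ↔ r ≤ ρ) := by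
  rcases le_or_gt r ρ with hr | hr
  · filter_upwards [eventually_nhdsWithin_of_eventually_nhds (eventually_gt_nhds one_pos),
      self_mem_nhdsWithin] with c hc_pos hc_lt
    have hlt : c * r < ρ :=
      calc c * r ≤ c * ρ := mul_le_mul_of_nonneg_left hr hc_pos.le
        _ < ρ := mul_lt_of_lt_one_left hρ hc_lt
    exact ⟨hlt.ne, iff_of_true hlt.le hr⟩
  · have hlim : Tendsto (· * r) (𝓝[<] (1 : ℝ)) (𝓝 r) :=
      ((continuous_mul_const r).tendsto' 1 r (one_mul r)).mono_left nhdsWithin_le_nhds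
    filter_upwards [hlim.eventually_const_lt hr] with c hc
    exact ⟨hc.ne', iff_of_false hc.not_ge hr.not_ge⟩

section NormedSpace

variable {E : Type*} [SeminormedAddCommGroup E] [NormedSpace ℝ E] {ρ : ℝ}

theorem exists_pos_forall_dist_smul_ne_and_le_iff (hρ : 0 < ρ) (X : Finset E) :
    ∃ c : ℝ, 0 < c ∧ ∀ x ∈ X, ∀ y ∈ X,
      dist (c • x) (c • y) ≠ ρ ∧ (dist (c • x) (c • y) ≤ ρ ↔ dist x y ≤ ρ) := by
  have hscale : ∀ᶠ c in 𝓝[<] (1 : ℝ), ∀ x ∈ X, ∀ y ∈ X,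
      c * dist x y ≠ ρ ∧ (c * dist x y ≤ ρ ↔ dist x y ≤ ρ) := by
    simp only [eventually_all_finset]
    exact fun x _ y _ ↦ eventually_mul_ne_and_mul_le_iff hρ (dist x y)
  have hpos : ∀ᶠ c in 𝓝[<] (1 : ℝ), 0 < c :=
    eventually_nhdsWithin_of_eventually_nhds (eventually_gt_nhds one_pos)
  obtain ⟨c, hc, hc_pos⟩ := (hscale.and hpos).exists
  refine ⟨c, hc_pos, fun x hx y hy ↦ ?_⟩
  rw [dist_smul₀, Real.norm_of_nonneg hc_pos.le]
  exact hc x hx y hy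

theorem exists_generic_vietorisRips_representation_general [DecidableEq E] (hρ : 0 < ρ)
    (X : Finset E) :
    ∃ (Y : Finset E) (g : E → E),
      Set.BijOn g X Y ∧ IsRipsEquivOn ρ g X ∧ IsGenericRips ρ Y := by
  obtain ⟨c, hc_pos, hc⟩ := exists_pos_forall_dist_smul_ne_and_le_iff hρ X
  refine ⟨X.image (c • ·), (c • ·), ?bijOn, ?equiv, ?generic⟩
  case bijOn =>
    rw [Finset.coe_image]
    exact (smul_right_injective E hc_pos.ne').injOn.bijOn_image
  case equiv => exact isRipsEquivOn_of_dist_le_iff fun x hx y hy ↦ (hc x hx y hy).2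
  case generic =>
    apply isGenericRips_of_dist_ne
    simp only [Finset.forall_mem_image]
    exact fun x hx y hy ↦ (hc x hx y hy).1

end NormedSpace

/-- Every finite simplicial complex admitting a `d`-dimensional Vietoris–Rips
representation with respect to `ρ` admits a generic one: there are a point set `Y`,
a bijection `g : X → Y` realizing a combinatorial equivalence `VR(X,ρ) ≃ VR(Y,ρ)`,
and a `δ > 0` such that moving each point of `Y` by less than `δ` yields a
Vietoris–Rips complex combinatorially equivalent to `VR(Y,ρ)`. -/
theorem exists_generic_vietorisRips_representation
    (d : ℕ) (hd : 1 ≤ d) (ρ : ℝ) (hρ : 0 < ρ) (X : Finset (EuclideanSpace ℝ (Fin d))) :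
    ∃ Y : Finset (EuclideanSpace ℝ (Fin d)),
      ∃ g : EuclideanSpace ℝ (Fin d) → EuclideanSpace ℝ (Fin d),
        Set.BijOn g ↑X ↑Y ∧
        (∀ A : Finset (EuclideanSpace ℝ (Fin d)), A ⊆ X → A.Nonempty →
          (IsVRSimplex ρ A ↔ IsVRSimplex ρ (A.image g))) ∧
        ∃ δ > (0 : ℝ), ∀ Z : Finset (EuclideanSpace ℝ (Fin d)),
          ∀ f : EuclideanSpace ℝ (Fin d) → EuclideanSpace ℝ (Fin d),
            Set.BijOn f ↑Y ↑Z → (∀ y ∈ Y, ‖f y - y‖ < δ) →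
            ∀ B : Finset (EuclideanSpace ℝ (Fin d)), B ⊆ Y → B.Nonempty →
              (IsVRSimplex ρ B ↔ IsVRSimplex ρ (B.image f)) := by
  simp only [IsVRSimplex, ← dist_eq_norm]
  obtain ⟨Y, g, hg, hequiv, δ, hδ, hf⟩ := exists_generic_vietorisRips_representation_general hρ X
  exact ⟨Y, g, hg, hequiv, δ, hδ, fun _ f _ ↦ hf f⟩
end

section
/- Let d ≥ 1 and let X, Y ⊆ ℝ^d be finite nonempty sets with |X| = |Y| ≤ 2. Then dist(X,Y) = d_Haus(X,Y); that is, the minimum over bijections f : X → Y of max_{x ∈ X} ‖f(x) − x‖ equals the Hausdorff distance between X and Y. In particular, for two-element sets X = {x₁,x₂} and Y = {y₁,y₂}, min( max(‖x₁−y₁‖, ‖x₂−y₂‖), max(‖x₁−y₂‖, ‖x₂−y₁‖) ) = d_Haus(X,Y). -/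
/-- The matching distance between two finite point sets: the infimum over bijections
`f : X → Y` of the maximal displacement `max_{x ∈ X} ‖f x - x‖`. -/
noncomputable def matchDist {d : ℕ} (X Y : Finset (EuclideanSpace ℝ (Fin d)))
    (hX : X.Nonempty) : ℝ :=
  sInf ((fun f : EuclideanSpace ℝ (Fin d) → EuclideanSpace ℝ (Fin d) =>
    X.sup' hX fun x => ‖f x - x‖) '' {f | Set.BijOn f ↑X ↑Y})

/-!
The maximal displacement of any bijection bounds the Hausdorff distance `r` from above. Conversely,
every point of either set has a point of the other within distance `r`. For two-point sets this
already yields a perfect matching: if `x₁` and `x₂` are both near the same `yⱼ`, then the other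
point of `Y` is near some `xᵢ`; match it with that `xᵢ` and `yⱼ` with the remaining point of `X`.
-/

open Metric Set

section Relation

variable {α β : Type*} {x₁ x₂ : α} {y₁ y₂ : β}

theorem matching_or_matching_of_pair_covers {R : α → β → Prop}
    (hleft : ∀ x ∈ ({x₁, x₂} : Set α), ∃ y ∈ ({y₁, y₂} : Set β), R x y)
    (hright : ∀ y ∈ ({y₁, y₂} : Set β), ∃ x ∈ ({x₁, x₂} : Set α), R x y) :
    (R x₁ y₁ ∧ R x₂ y₂) ∨ (R x₁ y₂ ∧ R x₂ y₁) := by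
  simp only [mem_insert_iff, mem_singleton_iff, forall_eq_or_imp, forall_eq, exists_eq_or_imp,
    exists_eq_left] at hleft hright
  obtain ⟨h₁₁ | h₁₂, h₂₁ | h₂₂⟩ := hleft
  · exact hright.2.symm.imp (fun h₂₂ ↦ ⟨h₁₁, h₂₂⟩) (fun h₁₂ ↦ ⟨h₁₂, h₂₁⟩)
  · exact .inl ⟨h₁₁, h₂₂⟩
  · exact .inr ⟨h₁₂, h₂₁⟩
  · exact hright.1.imp (fun h₁₁ ↦ ⟨h₁₁, h₂₂⟩) (fun h₂₁ ↦ ⟨h₁₂, h₂₁⟩)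

theorem exists_bijOn_pair (hx : x₁ ≠ x₂) (hy : y₁ ≠ y₂) :
    ∃ f : α → β, BijOn f {x₁, x₂} {y₁, y₂} ∧ f x₁ = y₁ ∧ f x₂ = y₂ := by
  classical
  let f : α → β := Function.update (fun _ ↦ y₂) x₁ y₁
  have hf₁ : f x₁ = y₁ := Function.update_self ..
  have hf₂ : f x₂ = y₂ := Function.update_of_ne hx.symm ..
  have hbij : BijOn f {x₂} {y₂} := bijOn_singleton.2 hf₂
  have hnotMem : f x₁ ∉ ({y₂} : Set β) := by rwa [hf₁]
  exact ⟨f, hf₁ ▸ hbij.insert hnotMem, hf₁, hf₂⟩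

end Relation

section PseudoMetricSpace

variable {α : Type*} [PseudoMetricSpace α]

theorem exists_mem_dist_le_hausdorffDist {s t : Set α} {x : α} (ht : IsCompact t) (hx : x ∈ s)
    (hfin : hausdorffEDist s t ≠ ⊤) : ∃ y ∈ t, dist x y ≤ hausdorffDist s t := by
  have htne : t.Nonempty := nonempty_of_hausdorffEDist_ne_top ⟨x, hx⟩ hfin
  obtain ⟨y, hy, hxy⟩ := ht.exists_infDist_eq_dist htne x
  exact ⟨y, hy, hxy ▸ infDist_le_hausdorffDist_of_mem hx hfin⟩

theorem hausdorffDist_image_le_of_dist_le {s : Set α} {f : α → α} {r : ℝ} (hr : 0 ≤ r)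
    (hf : ∀ x ∈ s, dist (f x) x ≤ r) : hausdorffDist s (f '' s) ≤ r :=
  hausdorffDist_le_of_mem_dist hr
    (fun x hx ↦ ⟨f x, mem_image_of_mem f hx, dist_comm x (f x) ▸ hf x hx⟩)
    (forall_mem_image.2 fun x hx ↦ ⟨x, hx, hf x hx⟩)

theorem hausdorffDist_le_sup'_dist_of_bijOn {X Y : Finset α} (hX : X.Nonempty) {f : α → α}
    (hf : BijOn f X Y) : hausdorffDist (X : Set α) Y ≤ X.sup' hX fun x ↦ dist (f x) x := by
  have hle : ∀ x ∈ X, dist (f x) x ≤ X.sup' hX fun x ↦ dist (f x) x :=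
    fun _ hx ↦ Finset.le_sup' (fun x ↦ dist (f x) x) hx
  obtain ⟨x, hx⟩ := hX
  rw [← hf.image_eq]
  exact hausdorffDist_image_le_of_dist_le (dist_nonneg.trans (hle x hx)) hle

theorem hausdorffDist_pair_le_max (x₁ x₂ y₁ y₂ : α) :
    hausdorffDist {x₁, x₂} {y₁, y₂} ≤ max (dist x₁ y₁) (dist x₂ y₂) := by
  apply hausdorffDist_le_of_mem_dist (le_max_of_le_left dist_nonneg) <;>
    simp [dist_comm y₁, dist_comm y₂]

theorem dist_le_hausdorffDist_pair_or_swap (x₁ x₂ y₁ y₂ : α) :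
    (dist x₁ y₁ ≤ hausdorffDist {x₁, x₂} {y₁, y₂} ∧
        dist x₂ y₂ ≤ hausdorffDist {x₁, x₂} {y₁, y₂}) ∨
      (dist x₁ y₂ ≤ hausdorffDist {x₁, x₂} {y₁, y₂} ∧
        dist x₂ y₁ ≤ hausdorffDist {x₁, x₂} {y₁, y₂}) := by
  have hfinite (a b : α) : ({a, b} : Set α).Finite := toFinite _
  have hfin (a b a' b' : α) : hausdorffEDist {a, b} {a', b'} ≠ ⊤ :=
    hausdorffEDist_ne_top_of_nonempty_of_bounded (insert_nonempty _ _) (insert_nonempty _ _)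
      (hfinite a b).isBounded (hfinite a' b').isBounded
  refine matching_or_matching_of_pair_covers
    (R := fun x y ↦ dist x y ≤ hausdorffDist {x₁, x₂} {y₁, y₂}) (fun x hx ↦ ?_) (fun y hy ↦ ?_)
  · exact exists_mem_dist_le_hausdorffDist (hfinite y₁ y₂).isCompact hx (hfin _ _ _ _)
  · simpa only [dist_comm y, hausdorffDist_comm (s := {y₁, y₂})] using
      exists_mem_dist_le_hausdorffDist (hfinite x₁ x₂).isCompact hy (hfin _ _ _ _)

theorem min_max_dist_eq_hausdorffDist_pair (x₁ x₂ y₁ y₂ : α) :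
    min (max (dist x₁ y₁) (dist x₂ y₂)) (max (dist x₁ y₂) (dist x₂ y₁)) =
      hausdorffDist {x₁, x₂} {y₁, y₂} := by
  apply le_antisymm
  · simpa only [min_le_iff, max_le_iff] using dist_le_hausdorffDist_pair_or_swap x₁ x₂ y₁ y₂
  · exact le_min (hausdorffDist_pair_le_max x₁ x₂ y₁ y₂)
      (pair_comm y₂ y₁ ▸ hausdorffDist_pair_le_max x₁ x₂ y₂ y₁)

theorem exists_bijOn_pair_dist_le {x₁ x₂ y₁ y₂ : α} {r : ℝ} (hx : x₁ ≠ x₂) (hy : y₁ ≠ y₂)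
    (h₁ : dist x₁ y₁ ≤ r) (h₂ : dist x₂ y₂ ≤ r) :
    ∃ f : α → α, BijOn f {x₁, x₂} {y₁, y₂} ∧ ∀ x ∈ ({x₁, x₂} : Set α), dist (f x) x ≤ r := by
  obtain ⟨f, hf, rfl, rfl⟩ := exists_bijOn_pair hx hy
  refine ⟨f, hf, ?_⟩
  rintro x (rfl | rfl)
  · rwa [dist_comm]
  · rwa [dist_comm]

theorem exists_bijOn_dist_le_hausdorffDist_of_card_le_two {X Y : Finset α} (hX : X.Nonempty)
    (hcard : X.card = Y.card) (htwo : X.card ≤ 2) :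
    ∃ f : α → α, BijOn f X Y ∧ ∀ x ∈ X, dist (f x) x ≤ hausdorffDist (X : Set α) Y := by
  classical
  have hpos : 0 < X.card := hX.card_pos
  obtain hone | htwo : X.card = 1 ∨ X.card = 2 := by omega
  · obtain ⟨x, rfl⟩ := Finset.card_eq_one.1 hone
    obtain ⟨y, rfl⟩ := Finset.card_eq_one.1 (hcard ▸ hone)
    exact ⟨fun _ ↦ y, by simp, by simp [dist_comm]⟩
  · obtain ⟨x₁, x₂, hx, rfl⟩ := Finset.card_eq_two.1 htwo
    obtain ⟨y₁, y₂, hy, rfl⟩ := Finset.card_eq_two.1 (hcard ▸ htwo)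
    simp only [← Finset.mem_coe, Finset.coe_pair]
    obtain ⟨h₁, h₂⟩ | ⟨h₁, h₂⟩ := dist_le_hausdorffDist_pair_or_swap x₁ x₂ y₁ y₂
    · exact exists_bijOn_pair_dist_le hx hy h₁ h₂
    · simpa only [pair_comm y₂ y₁] using exists_bijOn_pair_dist_le hx hy.symm h₁ h₂

theorem matchDist_eq_hausdorffDist_of_card_le_two_general :
    (∀ X Y : Finset α, ∀ hX : X.Nonempty, X.card = Y.card → X.card ≤ 2 →
      IsLeast ((fun f : α → α ↦ X.sup' hX fun x ↦ dist (f x) x) '' {f | BijOn f X Y})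
        (hausdorffDist (X : Set α) Y)) ∧
    (∀ x₁ x₂ y₁ y₂ : α,
      min (max (dist x₁ y₁) (dist x₂ y₂)) (max (dist x₁ y₂) (dist x₂ y₁)) =
        hausdorffDist {x₁, x₂} {y₁, y₂}) := by
  refine ⟨fun X Y hX hcard htwo ↦ ⟨?_, ?_⟩, min_max_dist_eq_hausdorffDist_pair⟩
  · obtain ⟨f, hf, hle⟩ := exists_bijOn_dist_le_hausdorffDist_of_card_le_two hX hcard htwo
    exact ⟨f, hf, (Finset.sup'_le hX _ hle).antisymm (hausdorffDist_le_sup'_dist_of_bijOn hX hf)⟩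
  · rintro _ ⟨f, hf, rfl⟩
    exact hausdorffDist_le_sup'_dist_of_bijOn hX hf

end PseudoMetricSpace

/-- For finite nonempty sets `X, Y ⊆ ℝ^d` with `|X| = |Y| ≤ 2`, the matching distance
equals the Hausdorff distance.  In particular, for two-element sets
`X = {x₁, x₂}` and `Y = {y₁, y₂}`,
`min (max ‖x₁-y₁‖ ‖x₂-y₂‖) (max ‖x₁-y₂‖ ‖x₂-y₁‖) = d_Haus(X,Y)`. -/
theorem matchDist_eq_hausdorffDist_of_card_le_two (d : ℕ) (hd : 1 ≤ d) :
    (∀ X Y : Finset (EuclideanSpace ℝ (Fin d)), ∀ hX : X.Nonempty,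
      X.card = Y.card → X.card ≤ 2 →
        matchDist X Y hX = Metric.hausdorffDist (↑X : Set (EuclideanSpace ℝ (Fin d))) ↑Y) ∧
    (∀ x₁ x₂ y₁ y₂ : EuclideanSpace ℝ (Fin d), x₁ ≠ x₂ → y₁ ≠ y₂ →
      min (max ‖x₁ - y₁‖ ‖x₂ - y₂‖) (max ‖x₁ - y₂‖ ‖x₂ - y₁‖) =
        Metric.hausdorffDist ({x₁, x₂} : Set (EuclideanSpace ℝ (Fin d))) {y₁, y₂}) := by
  simp only [matchDist, ← dist_eq_norm]
  exact matchDist_eq_hausdorffDist_of_card_le_two_general.imp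
    (fun h X Y hX hcard htwo ↦ (h X Y hX hcard htwo).csInf_eq)
    (fun h x₁ x₂ y₁ y₂ _ _ ↦ h x₁ x₂ y₁ y₂)
end

section
/- Let n ≥ 2 and let X = {x_0, …, x_{2n−1}} ⊆ ℝ² be the 2n points x_k = (cos(kπ/n), sin(kπ/n)) equidistributed on the unit circle. Let ρ satisfy 2·cos(π/(2n)) ≤ ρ < 2. Then a subset F ⊆ X is a simplex of the Vietoris–Rips complex VR(X,ρ) if and only if F contains no antipodal pair, i.e. there is no index k with both x_k ∈ F and x_{(k+n) mod 2n} ∈ F. Hence VR(X,ρ) is combinatorially equivalent to the boundary complex of the n-dimensional cross-polytope. -/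
open Real
open scoped Classical

/-- The `k`-th of `2n` points equidistributed on the unit circle in `ℝ²`. -/
noncomputable def circlePt (n k : ℕ) : EuclideanSpace ℝ (Fin 2) :=
  (WithLp.equiv 2 (Fin 2 → ℝ)).symm ![Real.cos (k * π / n), Real.sin (k * π / n)]

/-!
The chord between the points with indices `i` and `j` has length `2 |cos (m π / (2n))|` with
`m = i - j - n`, the offset of `i` from the antipode of `j`. If `2n ∣ m` this is `2`; otherwise
`m π / (2n)` is at distance at least `π / (2n)` from every multiple of `π`, so the chord has length
at most `2 cos (π / (2n))`. A threshold `ρ` in the stated range therefore separates antipodal pairs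
from all others.
-/

theorem norm_cos_sin_sub_cos_sin (α β : ℝ) :
    ‖!₂[cos α, sin α] - !₂[cos β, sin β]‖ = 2 * |sin ((α - β) / 2)| := by
  have sum_sq : (cos α - cos β) ^ 2 + (sin α - sin β) ^ 2 = (2 * sin ((α - β) / 2)) ^ 2 := by
    rw [cos_sub_cos, sin_sub_sin]
    linear_combination 4 * sin ((α - β) / 2) ^ 2 * sin_sq_add_cos_sq ((α + β) / 2)
  calc ‖!₂[cos α, sin α] - !₂[cos β, sin β]‖
      = √((cos α - cos β) ^ 2 + (sin α - sin β) ^ 2) := by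
        simp [EuclideanSpace.norm_eq, Fin.sum_univ_two]
    _ = 2 * |sin ((α - β) / 2)| := by rw [sum_sq, sqrt_sq_eq_abs, abs_mul, abs_two]

theorem abs_cos_le_cos_of_mem_Icc {x δ : ℝ} (hδ : 0 ≤ δ) (hx : x ∈ Set.Icc δ (π - δ)) :
    |cos x| ≤ cos δ := by
  obtain ⟨hδx, hxδ⟩ := hx
  have lower : cos (π - δ) ≤ cos x :=
    cos_le_cos_of_nonneg_of_le_pi (hδ.trans hδx) (sub_le_self π hδ) hxδ
  have upper : cos x ≤ cos δ :=
    cos_le_cos_of_nonneg_of_le_pi hδ (hxδ.trans (sub_le_self π hδ)) hδx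
  rw [cos_pi_sub] at lower
  exact abs_le.2 ⟨lower, upper⟩

section CosMulPiDiv

variable {N : ℕ}

theorem abs_cos_int_mul_pi_div_of_dvd (hN : N ≠ 0) {m : ℤ} (h : (N : ℤ) ∣ m) :
    |cos (m * π / N)| = 1 := by
  obtain ⟨q, rfl⟩ := h
  have angle : ((N * q : ℤ) : ℝ) * π / N = q * π := by
    push_cast
    field_simp
  rw [angle, abs_cos_int_mul_pi]

theorem abs_cos_emod_mul_pi_div (hN : N ≠ 0) (m : ℤ) :
    |cos ((m % N : ℤ) * π / N)| = |cos (m * π / N)| := by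
  have angle : (m : ℝ) * π / N = (m % N : ℤ) * π / N + (m / N : ℤ) * π := by
    have division : (m : ℝ) = (m % N : ℤ) + N * (m / N : ℤ) :=
      mod_cast (Int.emod_add_mul_ediv m N).symm
    rw [division]
    field_simp
  rw [angle, cos_add_int_mul_pi, abs_mul, abs_zpow, abs_neg, abs_one, one_zpow, one_mul]

theorem abs_cos_int_mul_pi_div_le_of_not_dvd (hN : N ≠ 0) {m : ℤ} (h : ¬(N : ℤ) ∣ m) :
    |cos (m * π / N)| ≤ cos (π / N) := by
  have one_le_emod : 1 ≤ m % N := (Int.emod_pos_of_not_dvd h).resolve_left (mod_cast hN)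
  have emod_le : m % N ≤ N - 1 :=
    Int.le_sub_one_of_lt (Int.emod_lt_of_pos m (mod_cast Nat.pos_of_ne_zero hN))
  rw [← abs_cos_emod_mul_pi_div hN]
  refine abs_cos_le_cos_of_mem_Icc (by positivity) ⟨?_, ?_⟩
  · calc π / N = 1 * π / N := by rw [one_mul]
      _ ≤ (m % N : ℤ) * π / N := by gcongr; exact_mod_cast one_le_emod
  · calc (m % N : ℤ) * π / N ≤ (N - 1) * π / N := by gcongr; exact_mod_cast emod_le
      _ = π - π / N := by field_simp

end CosMulPiDiv

section CirclePt

variable {n : ℕ}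

theorem norm_circlePt_sub_circlePt (hn : n ≠ 0) (i j : ℕ) :
    ‖circlePt n i - circlePt n j‖ =
      2 * |cos ((i - (j + n : ℕ) : ℤ) * π / (2 * n : ℕ))| := by
  have half_angle : (i * π / n - j * π / n) / 2 =
      (i - (j + n : ℕ) : ℤ) * π / (2 * n : ℕ) + π / 2 := by
    push_cast
    field_simp
    ring
  calc ‖circlePt n i - circlePt n j‖
      = 2 * |sin ((i * π / n - j * π / n) / 2)| := norm_cos_sin_sub_cos_sin _ _
    _ = 2 * |cos ((i - (j + n : ℕ) : ℤ) * π / (2 * n : ℕ))| := by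
        rw [half_angle, sin_add_pi_div_two]

theorem norm_circlePt_sub_circlePt_of_modEq (hn : n ≠ 0) {i j : ℕ} (h : j + n ≡ i [MOD 2 * n]) :
    ‖circlePt n i - circlePt n j‖ = 2 := by
  rw [norm_circlePt_sub_circlePt hn,
    abs_cos_int_mul_pi_div_of_dvd (mul_ne_zero two_ne_zero hn) h.dvd, mul_one]

theorem norm_circlePt_sub_circlePt_le_of_not_modEq (hn : n ≠ 0) {i j : ℕ}
    (h : ¬j + n ≡ i [MOD 2 * n]) :
    ‖circlePt n i - circlePt n j‖ ≤ 2 * cos (π / (2 * n)) := by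
  rw [Nat.modEq_iff_dvd] at h
  have cos_le := abs_cos_int_mul_pi_div_le_of_not_dvd (mul_ne_zero two_ne_zero hn) h
  rw [norm_circlePt_sub_circlePt hn]
  push_cast at cos_le ⊢
  gcongr

theorem norm_circlePt_sub_circlePt_le_iff (hn : n ≠ 0) {ρ : ℝ}
    (hρ₁ : 2 * cos (π / (2 * n)) ≤ ρ) (hρ₂ : ρ < 2) {i j : ℕ} :
    ‖circlePt n i - circlePt n j‖ ≤ ρ ↔ ¬j + n ≡ i [MOD 2 * n] := by
  refine ⟨fun norm_le antipodal => ?_, fun not_antipodal =>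
    (norm_circlePt_sub_circlePt_le_of_not_modEq hn not_antipodal).trans hρ₁⟩
  rw [norm_circlePt_sub_circlePt_of_modEq hn antipodal] at norm_le
  exact norm_le.not_gt hρ₂

end CirclePt

/-- For `2n` points equidistributed on the unit circle and
`2 cos (π / (2n)) ≤ ρ < 2`, a subset is a simplex of the Vietoris–Rips complex
`VR(X, ρ)` iff it contains no antipodal pair; hence `VR(X, ρ)` is combinatorially
equivalent to the boundary complex of the `n`-dimensional cross-polytope. -/
theorem vietorisRips_circle_eq_crossPolytope
    (n : ℕ) (hn : 2 ≤ n) (ρ : ℝ) (hρ₁ : 2 * Real.cos (π / (2 * n)) ≤ ρ) (hρ₂ : ρ < 2)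
    (F : Finset (EuclideanSpace ℝ (Fin 2)))
    (hF : F ⊆ (Finset.range (2 * n)).image (circlePt n)) :
    (∀ x ∈ F, ∀ x' ∈ F, ‖x - x'‖ ≤ ρ) ↔
      ∀ k < 2 * n, ¬(circlePt n k ∈ F ∧ circlePt n ((k + n) % (2 * n)) ∈ F) := by
  have edge_iff {i j : ℕ} : ‖circlePt n i - circlePt n j‖ ≤ ρ ↔ ¬j + n ≡ i [MOD 2 * n] :=
    norm_circlePt_sub_circlePt_le_iff (by lia) hρ₁ hρ₂
  constructor
  · rintro simplex k - ⟨hk, hk_antipode⟩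
    exact edge_iff.1 (simplex _ hk_antipode _ hk) (Nat.mod_modEq _ _).symm
  · intro no_antipodal x hx y hy
    obtain ⟨i, hi, rfl⟩ := Finset.mem_image.1 (hF hx)
    obtain ⟨j, hj, rfl⟩ := Finset.mem_image.1 (hF hy)
    rw [Finset.mem_range] at hi hj
    refine edge_iff.2 fun antipodal => no_antipodal j hj ⟨hy, ?_⟩
    rwa [antipodal, Nat.mod_eq_of_lt hi]
end

section
/- (Borel–Cantelli, pairwise independent version) Let (Ω, 𝔉, ℙ) be a probability space and let E_1, E_2, … be a sequence of pairwise independent measurable events with ∑_{i=1}^∞ ℙ(E_i) = ∞. Then ℙ(limsup_{i→∞} E_i) = 1, i.e. almost surely infinitely many of the events E_i occur. -/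
open MeasureTheory Filter

/-!
Let `S` be the number of events that occur among finitely many of the `E i`. Nonpositive
correlation gives `Var[S] ≤ 𝔼[S]`, so by Chebyshev `ℙ(S = 0) ≤ Var[S] / 𝔼[S]² ≤ 1 / 𝔼[S]`.
Hence almost surely some event occurs in any family whose probabilities have divergent sum.
Divergence survives the removal of finitely many indices, and there are only countably many
ways of removing them.
-/

open ProbabilityTheory
open scoped ENNReal

lemma tsum_subtype_notMem_eq_top {ι : Type*} {f : ι → ℝ≥0∞} {t : Finset ι}
    (hf : ∀ i ∈ t, f i ≠ ∞) (hdiv : ∑' i, f i = ∞) : ∑' i : {i // i ∉ t}, f i = ∞ := by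
  have hsplit : ∑ i ∈ t, f i + ∑' i : {i // i ∉ t}, f i = ∞ :=
    (ENNReal.sum_add_tsum_compl t f).trans hdiv
  exact (ENNReal.add_eq_top.1 hsplit).resolve_left (ENNReal.sum_ne_top.2 hf)

section Variance

variable {Ω ι : Type*} [MeasurableSpace Ω] {μ : Measure Ω}

lemma measure_setOf_eq_zero_le_variance_div_sq [IsFiniteMeasure μ] {X : Ω → ℝ}
    (hX : MemLp X 2 μ) (hmean : μ[X] ≠ 0) :
    μ {ω | X ω = 0} ≤ ENNReal.ofReal (Var[X; μ] / μ[X] ^ 2) := by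
  have hsub : {ω | X ω = 0} ⊆ {ω | |μ[X]| ≤ |X ω - μ[X]|} := fun ω (hω : X ω = 0) ↦ by
    simp [hω]
  calc μ {ω | X ω = 0} ≤ μ {ω | |μ[X]| ≤ |X ω - μ[X]|} := measure_mono hsub
    _ ≤ ENNReal.ofReal (Var[X; μ] / |μ[X]| ^ 2) :=
      meas_ge_le_variance_div_sq hX (abs_pos.2 hmean)
    _ = ENNReal.ofReal (Var[X; μ] / μ[X] ^ 2) := by rw [sq_abs]

lemma variance_sum_le_sum_variance_of_covariance_nonpos [IsFiniteMeasure μ]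
    {X : ι → Ω → ℝ} {s : Finset ι}
    (hX : ∀ i ∈ s, MemLp (X i) 2 μ)
    (hcov : (s : Set ι).Pairwise fun i j ↦ cov[X i, X j; μ] ≤ 0) :
    Var[∑ i ∈ s, X i; μ] ≤ ∑ i ∈ s, Var[X i; μ] := by
  classical
  rw [variance_sum' hX]
  refine Finset.sum_le_sum fun i hi ↦ ?_
  have hoff : ∑ j ∈ s.erase i, cov[X i, X j; μ] ≤ 0 := Finset.sum_nonpos fun j hj ↦
    hcov hi (Finset.mem_of_mem_erase hj) (Finset.ne_of_mem_erase hj).symm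
  rw [← Finset.add_sum_erase s _ hi, covariance_self (hX i hi).aemeasurable]
  exact add_le_of_nonpos_right hoff

end Variance

section Events

variable {Ω ι : Type*} [MeasurableSpace Ω] {μ : Measure Ω} {A B : Set Ω} {E : ι → Set Ω}

lemma memLp_indicator_one [IsFiniteMeasure μ] (p : ℝ≥0∞) (hA : MeasurableSet A) :
    MemLp (A.indicator (1 : Ω → ℝ)) p μ :=
  memLp_indicator_const p hA 1 (.inr (measure_ne_top μ A))

lemma integral_sum_indicator_one [IsFiniteMeasure μ] {s : Finset ι}
    (hE : ∀ i ∈ s, MeasurableSet (E i)) :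
    μ[∑ i ∈ s, (E i).indicator (1 : Ω → ℝ)] = ∑ i ∈ s, μ.real (E i) := by
  simp only [Finset.sum_apply]
  rw [integral_finsetSum s fun i hi ↦ (memLp_indicator_one 1 (hE i hi)).integrable le_rfl]
  exact Finset.sum_congr rfl fun i hi ↦ integral_indicator_one (hE i hi)

variable [IsProbabilityMeasure μ]

lemma covariance_indicator_one (hA : MeasurableSet A) (hB : MeasurableSet B) :
    cov[A.indicator (1 : Ω → ℝ), B.indicator 1; μ] =
      μ.real (A ∩ B) - μ.real A * μ.real B := by
  rw [covariance_eq_sub (memLp_indicator_one 2 hA) (memLp_indicator_one 2 hB),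
    ← Set.inter_indicator_one, integral_indicator_one (hA.inter hB), integral_indicator_one hA,
    integral_indicator_one hB]

lemma covariance_indicator_one_nonpos (hA : MeasurableSet A) (hB : MeasurableSet B)
    (hAB : μ (A ∩ B) ≤ μ A * μ B) :
    cov[A.indicator (1 : Ω → ℝ), B.indicator 1; μ] ≤ 0 := by
  rw [covariance_indicator_one hA hB, sub_nonpos, measureReal_def, measureReal_def,
    measureReal_def, ← ENNReal.toReal_mul]
  exact ENNReal.toReal_mono (by finiteness) hAB

lemma variance_indicator_one_le (hA : MeasurableSet A) :
    Var[A.indicator (1 : Ω → ℝ); μ] ≤ μ.real A := by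
  rw [← covariance_self (memLp_indicator_one 2 hA).aemeasurable, covariance_indicator_one hA hA,
    Set.inter_self]
  exact sub_le_self _ (by positivity)

lemma variance_sum_indicator_one_le {s : Finset ι} (hE : ∀ i ∈ s, MeasurableSet (E i))
    (hcorr : (s : Set ι).Pairwise fun i j ↦ μ (E i ∩ E j) ≤ μ (E i) * μ (E j)) :
    Var[∑ i ∈ s, (E i).indicator (1 : Ω → ℝ); μ] ≤ ∑ i ∈ s, μ.real (E i) :=
  calc Var[∑ i ∈ s, (E i).indicator (1 : Ω → ℝ); μ]
    _ ≤ ∑ i ∈ s, Var[(E i).indicator (1 : Ω → ℝ); μ] :=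
      variance_sum_le_sum_variance_of_covariance_nonpos
        (fun i hi ↦ memLp_indicator_one 2 (hE i hi)) fun i hi j hj hij ↦
          covariance_indicator_one_nonpos (hE i hi) (hE j hj) (hcorr hi hj hij)
    _ ≤ ∑ i ∈ s, μ.real (E i) :=
      Finset.sum_le_sum fun i hi ↦ variance_indicator_one_le (hE i hi)

lemma measure_biInter_compl_le_inv_sum {s : Finset ι} (hE : ∀ i ∈ s, MeasurableSet (E i))
    (hcorr : (s : Set ι).Pairwise fun i j ↦ μ (E i ∩ E j) ≤ μ (E i) * μ (E j)) :
    μ (⋂ i ∈ s, (E i)ᶜ) ≤ (∑ i ∈ s, μ (E i))⁻¹ := by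
  set S : Ω → ℝ := ∑ i ∈ s, (E i).indicator 1 with hS
  set m : ℝ := ∑ i ∈ s, μ.real (E i) with hm
  have hsum : ∑ i ∈ s, μ (E i) = ENNReal.ofReal m := by
    rw [hm, ENNReal.ofReal_sum_of_nonneg fun i _ ↦ measureReal_nonneg]
    exact Finset.sum_congr rfl fun i _ ↦ (ofReal_measureReal (measure_ne_top μ (E i))).symm
  have hmean : μ[S] = m := integral_sum_indicator_one hE
  have hvar : Var[S; μ] ≤ m := variance_sum_indicator_one_le hE hcorr
  have hzero : ⋂ i ∈ s, (E i)ᶜ ⊆ {ω | S ω = 0} := fun ω hω ↦ by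
    rw [Set.mem_iInter₂] at hω
    rw [Set.mem_ofPred_eq, hS, Finset.sum_apply]
    exact Finset.sum_eq_zero fun i hi ↦ Set.indicator_of_notMem (hω i hi) _
  rw [hsum]
  obtain hm0 | hmpos : m = 0 ∨ 0 < m :=
    (Finset.sum_nonneg fun i _ ↦ measureReal_nonneg).eq_or_lt'
  · simp [hm0]
  calc μ (⋂ i ∈ s, (E i)ᶜ) ≤ μ {ω | S ω = 0} := measure_mono hzero
    _ ≤ ENNReal.ofReal (Var[S; μ] / m ^ 2) := hmean ▸ measure_setOf_eq_zero_le_variance_div_sq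
      (memLp_finsetSum' s fun i hi ↦ memLp_indicator_one 2 (hE i hi)) (hmean ▸ hmpos.ne')
    _ ≤ ENNReal.ofReal (m / m ^ 2) := by gcongr
    _ = (ENNReal.ofReal m)⁻¹ := by
      rw [← ENNReal.ofReal_inv_of_pos hmpos, sq, div_self_mul_self']

lemma measure_iInter_compl_le_inv_tsum (hE : ∀ i, MeasurableSet (E i))
    (hcorr : Pairwise fun i j ↦ μ (E i ∩ E j) ≤ μ (E i) * μ (E j)) :
    μ (⋂ i, (E i)ᶜ) ≤ (∑' i, μ (E i))⁻¹ := by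
  rw [ENNReal.tsum_eq_iSup_sum, ENNReal.inv_iSup]
  refine le_iInf fun s ↦ ?_
  calc μ (⋂ i, (E i)ᶜ) ≤ μ (⋂ i ∈ s, (E i)ᶜ) :=
        measure_mono (Set.iInter_mono fun i ↦ Set.subset_iInter fun _ ↦ subset_rfl)
    _ ≤ (∑ i ∈ s, μ (E i))⁻¹ :=
        measure_biInter_compl_le_inv_sum (fun i _ ↦ hE i) (hcorr.set_pairwise s)

lemma ae_exists_mem_of_tsum_eq_top (hE : ∀ i, MeasurableSet (E i))
    (hcorr : Pairwise fun i j ↦ μ (E i ∩ E j) ≤ μ (E i) * μ (E j))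
    (hdiv : ∑' i, μ (E i) = ∞) :
    ∀ᵐ ω ∂μ, ∃ i, ω ∈ E i := by
  have hnone : μ (⋂ i, (E i)ᶜ) = 0 := by
    simpa [hdiv] using measure_iInter_compl_le_inv_tsum hE hcorr
  filter_upwards [measure_eq_zero_iff_ae_notMem.1 hnone] with ω hω
  simpa using hω

theorem borel_cantelli_pairwise_independent_general [Countable ι]
    (hE : ∀ i, MeasurableSet (E i))
    (hcorr : Pairwise fun i j ↦ μ (E i ∩ E j) ≤ μ (E i) * μ (E j))
    (hdiv : ∑' i, μ (E i) = ∞) :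
    μ (limsup E cofinite) = 1 := by
  have htail (t : Finset ι) : ∀ᵐ ω ∂μ, ∃ i : {i // i ∉ t}, ω ∈ E i :=
    ae_exists_mem_of_tsum_eq_top (fun i ↦ hE i)
      (hcorr.comp_of_injective Subtype.val_injective)
      (tsum_subtype_notMem_eq_top (fun i _ ↦ measure_ne_top μ (E i)) hdiv)
  have hinf : ∀ᵐ ω ∂μ, ω ∈ limsup E cofinite := by
    filter_upwards [ae_all_iff.2 htail] with ω hω
    rw [cofinite.limsup_set_eq]
    intro hfin
    obtain ⟨⟨i, hi_notMem⟩, hi⟩ := hω hfin.toFinset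
    exact hi_notMem (hfin.mem_toFinset.2 hi)
  exact (measure_congr (eventuallyEq_univ.2 hinf)).trans measure_univ

end Events

/-- Borel–Cantelli lemma, pairwise independent version: if the events `E i` are
pairwise independent and their probabilities sum to infinity, then almost surely
infinitely many of the events occur. -/
theorem borel_cantelli_pairwise_independent {Ω : Type*} [MeasurableSpace Ω]
    (μ : Measure Ω) [IsProbabilityMeasure μ]
    (E : ℕ → Set Ω) (hE : ∀ i, MeasurableSet (E i))
    (hindep : ∀ i j, i ≠ j → μ (E i ∩ E j) = μ (E i) * μ (E j))
    (hdiv : ∑' i, μ (E i) = ⊤) :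
    μ (Filter.limsup E Filter.atTop) = 1 := by
  rw [← Nat.cofinite_eq_atTop]
  exact borel_cantelli_pairwise_independent_general hE (fun i j hij ↦ (hindep i j hij).le) hdiv
end

section
/- Let (Ω, 𝔉, ℙ) be a probability space and let E, F, D⁻, D⁺ be measurable events satisfying ℙ(E ∩ F ∩ D⁻ ∩ D⁺) = ℙ(E ∩ D⁻)·ℙ(F ∩ D⁺). Then |ℙ(E ∩ F) − ℙ(E)·ℙ(F)| ≤ 2·ℙ(F ∩ (D⁺)ᶜ) + 3·ℙ(E ∩ (D⁻)ᶜ). -/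
open MeasureTheory

/-!
Shrink `E` to `A = E ∩ D⁻` and `F` to `B = F ∩ D⁺`. Both `ℙ(E ∩ F)` and `ℙ(E) ℙ(F)` can only
decrease, each by at most `ℙ(E \ A) + ℙ(F \ B)`, so their difference moves by at most this amount;
and for the pair `A`, `B` the difference vanishes.
-/

section Shrinking

variable {Ω : Type*} [MeasurableSpace Ω] {μ : Measure Ω} {A B E F : Set Ω}

theorem measureReal_inter_le_inter_add_sdiff_add_sdiff [IsFiniteMeasure μ] :
    μ.real (E ∩ F) ≤ μ.real (A ∩ B) + μ.real (E \ A) + μ.real (F \ B) := by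
  have cover : E ∩ F ⊆ A ∩ B ∪ E \ A ∪ F \ B := by
    rintro x ⟨hxE, hxF⟩
    by_cases hxA : x ∈ A <;> by_cases hxB : x ∈ B <;> simp [*]
  calc μ.real (E ∩ F)
      ≤ μ.real (A ∩ B ∪ E \ A ∪ F \ B) := measureReal_mono cover
    _ ≤ μ.real (A ∩ B ∪ E \ A) + μ.real (F \ B) := measureReal_union_le _ _
    _ ≤ μ.real (A ∩ B) + μ.real (E \ A) + μ.real (F \ B) := by
      gcongr
      exact measureReal_union_le _ _

theorem measureReal_mul_le_mul_add_sdiff_add_sdiff [IsZeroOrProbabilityMeasure μ] :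
    μ.real E * μ.real F ≤ μ.real A * μ.real B + μ.real (E \ A) + μ.real (F \ B) := by
  have hE : μ.real E ≤ μ.real A + μ.real (E \ A) := sub_le_iff_le_add'.mp le_measureReal_sdiff
  have hF : μ.real F ≤ μ.real B + μ.real (F \ B) := sub_le_iff_le_add'.mp le_measureReal_sdiff
  calc μ.real E * μ.real F
      ≤ (μ.real A + μ.real (E \ A)) * μ.real F := by gcongr
    _ = μ.real A * μ.real F + μ.real (E \ A) * μ.real F := add_mul _ _ _
    _ ≤ μ.real A * (μ.real B + μ.real (F \ B)) + μ.real (E \ A) * 1 := by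
      gcongr
      exact measureReal_le_one
    _ = μ.real A * μ.real B + μ.real (E \ A) + μ.real A * μ.real (F \ B) := by ring
    _ ≤ μ.real A * μ.real B + μ.real (E \ A) + μ.real (F \ B) := by
      gcongr
      exact mul_le_of_le_one_left measureReal_nonneg measureReal_le_one

theorem abs_measureReal_inter_sub_mul_sub_le_of_subset [IsZeroOrProbabilityMeasure μ]
    (hA : A ⊆ E) (hB : B ⊆ F) :
    |(μ.real (E ∩ F) - μ.real E * μ.real F) - (μ.real (A ∩ B) - μ.real A * μ.real B)| ≤
      μ.real (E \ A) + μ.real (F \ B) := by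
  have inter_mono : μ.real (A ∩ B) ≤ μ.real (E ∩ F) :=
    measureReal_mono (Set.inter_subset_inter hA hB)
  have mul_mono : μ.real A * μ.real B ≤ μ.real E * μ.real F := by gcongr <;> finiteness
  have inter_le : μ.real (E ∩ F) ≤ μ.real (A ∩ B) + μ.real (E \ A) + μ.real (F \ B) :=
    measureReal_inter_le_inter_add_sdiff_add_sdiff
  have mul_le : μ.real E * μ.real F ≤ μ.real A * μ.real B + μ.real (E \ A) + μ.real (F \ B) :=
    measureReal_mul_le_mul_add_sdiff_add_sdiff
  rw [abs_le]
  constructor <;> linarith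

end Shrinking

theorem decorrelation_inequality_general {Ω : Type*} [MeasurableSpace Ω]
    {μ : Measure Ω} [IsZeroOrProbabilityMeasure μ] {E F Dm Dp : Set Ω}
    (hindep : μ.real (E ∩ F ∩ Dm ∩ Dp) = μ.real (E ∩ Dm) * μ.real (F ∩ Dp)) :
    |μ.real (E ∩ F) - μ.real E * μ.real F| ≤ μ.real (F ∩ Dpᶜ) + μ.real (E ∩ Dmᶜ) := by
  have hinter : E ∩ Dm ∩ (F ∩ Dp) = E ∩ F ∩ Dm ∩ Dp := by
    rw [Set.inter_inter_inter_comm, Set.inter_assoc (E ∩ F)]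
  have hle := abs_measureReal_inter_sub_mul_sub_le_of_subset (μ := μ)
    (Set.inter_subset_left : E ∩ Dm ⊆ E) (Set.inter_subset_left : F ∩ Dp ⊆ F)
  rwa [hinter, hindep, sub_self, sub_zero, Set.sdiff_self_inter, Set.sdiff_self_inter,
    Set.sdiff_eq, Set.sdiff_eq, add_comm] at hle

/-- Decorrelation inequality: if the events `E, F` become independent after
intersecting with the half-space connection events `D⁻, D⁺`, then the covariance of
`E` and `F` is controlled by the probabilities of `F ∩ (D⁺)ᶜ` and `E ∩ (D⁻)ᶜ`. -/
theorem decorrelation_inequality {Ω : Type*} [MeasurableSpace Ω]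
    (μ : Measure Ω) [IsProbabilityMeasure μ]
    (E F Dm Dp : Set Ω)
    (hE : MeasurableSet E) (hF : MeasurableSet F)
    (hDm : MeasurableSet Dm) (hDp : MeasurableSet Dp)
    (hindep : (μ (E ∩ F ∩ Dm ∩ Dp)).toReal = (μ (E ∩ Dm)).toReal * (μ (F ∩ Dp)).toReal) :
    |(μ (E ∩ F)).toReal - (μ E).toReal * (μ F).toReal| ≤
      2 * (μ (F ∩ Dpᶜ)).toReal + 3 * (μ (E ∩ Dmᶜ)).toReal := by
  simp only [← measureReal_def] at hindep ⊢
  linarith [decorrelation_inequality_general hindep,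
    measureReal_nonneg (μ := μ) (s := F ∩ Dpᶜ), measureReal_nonneg (μ := μ) (s := E ∩ Dmᶜ)]
end
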